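/- Let n = p + q ≥ 2 be even and N = 2^{n/2}. Let h^μ : ℝⁿ → Mat(N, ℂ) (μ = 1,…,n) be continuously differentiable and satisfy the Clifford relations at every point. Set λ_k = (−1)^k (n − 2k), let A be the (n+1)×(n+1) Vandermonde matrix with entries A_{kl} = (λ_l)^k, let B = A^{−1} with entries b_{kl}, and let r_l = Σ_{k=1}^{n} b_{kl}/(n − λ_k) for l = 0,…,n. For each μ and x define W_μ(x) = Σ_{ρ=1}^n η_{ρρ} (∂_μ h^ρ)(x) h^ρ(x) and C_μ(x) = Σ_{l=0}^{n} r_l F^l(W_μ(x)), where F is the generator contraction built from h^1(x),…,h^n(x). Then the primitive field equation holds: ∂_μ h_ρ − [C_μ, h_ρ] = 0 for all μ, ρ = 1,…,n. -/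

import Mathlib

open Matrix

attribute [local instance] Matrix.normedAddCommGroup Matrix.normedSpace

/-- The diagonal metric entries η^{μμ} of signature (p,q). -/
def etaC (p q : ℕ) (μ : Fin (p + q)) : ℂ := if (μ : ℕ) < p then 1 else -1

/-- The Clifford relations h^μ h^ν + h^ν h^μ = 2 η^{μν} I for signature (p,q). -/
def CliffRel (p q N : ℕ) (h : Fin (p + q) → Matrix (Fin N) (Fin N) ℂ) : Prop :=
  ∀ μ ν : Fin (p + q), h μ * h ν + h ν * h μ =
    (2 * if μ = ν then etaC p q μ else 0) • (1 : Matrix (Fin N) (Fin N) ℂ)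

/-- The generator contraction F(U) = Σ_a η^{aa} h^a U h^a. -/
noncomputable def gencon (p q N : ℕ) (h : Fin (p + q) → Matrix (Fin N) (Fin N) ℂ)
    (U : Matrix (Fin N) (Fin N) ℂ) : Matrix (Fin N) (Fin N) ℂ :=
  ∑ a : Fin (p + q), etaC p q a • (h a * U * h a)

/-- λ_k = (−1)^k (n − 2k). -/
def lam (n k : ℕ) : ℤ := (-1) ^ k * ((n : ℤ) - 2 * (k : ℤ))

/-- The (n+1)×(n+1) Vandermonde matrix A_{kl} = (λ_l)^k over ℂ. -/
noncomputable def vand (n : ℕ) : Matrix (Fin (n + 1)) (Fin (n + 1)) ℂ :=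
  Matrix.of fun k l : Fin (n + 1) => ((lam n (l : ℕ) : ℂ)) ^ (k : ℕ)

/-- r_l = Σ_{k=1}^{n} b_{kl}/(n − λ_k), where b = A⁻¹. -/
noncomputable def rcoef (n : ℕ) (l : Fin (n + 1)) : ℂ :=
  ∑ k ∈ Finset.Ioi (0 : Fin (n + 1)),
    (vand n)⁻¹ k l / ((n : ℂ) - (lam n (k : ℕ) : ℂ))

/-- The partial derivative ∂_μ of a matrix-valued function on ℝⁿ. -/
noncomputable def pder {n N : ℕ} (μ : Fin n)
    (f : (Fin n → ℝ) → Matrix (Fin N) (Fin N) ℂ) (x : Fin n → ℝ) :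
    Matrix (Fin N) (Fin N) ℂ :=
  fderiv ℝ f x (Pi.single μ 1)

/-- W_μ(x) = Σ_ρ η_{ρρ} (∂_μ h^ρ)(x) h^ρ(x). -/
noncomputable def Wfun (p q N : ℕ)
    (h : Fin (p + q) → (Fin (p + q) → ℝ) → Matrix (Fin N) (Fin N) ℂ)
    (μ : Fin (p + q)) (x : Fin (p + q) → ℝ) : Matrix (Fin N) (Fin N) ℂ :=
  ∑ ρ : Fin (p + q), etaC p q ρ • (pder μ (h ρ) x * h ρ x)

/-- C_μ(x) = Σ_{l=0}^{n} r_l F^l(W_μ(x)). -/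
noncomputable def Cformula (p q N : ℕ)
    (h : Fin (p + q) → (Fin (p + q) → ℝ) → Matrix (Fin N) (Fin N) ℂ)
    (μ : Fin (p + q)) (x : Fin (p + q) → ℝ) : Matrix (Fin N) (Fin N) ℂ :=
  ∑ l : Fin (p + q + 1),
    rcoef (p + q) l •
      (gencon p q N (fun a => h a x))^[(l : ℕ)] (Wfun p q N h μ x)


lemma etaC_sq (p q : ℕ) (a : Fin (p + q)) : etaC p q a * etaC p q a = 1 := by
  unfold etaC; split_ifs <;> norm_num

lemma cliff_sq {p q N : ℕ} {h : Fin (p + q) → Matrix (Fin N) (Fin N) ℂ} (hc : CliffRel p q N h)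
    (a : Fin (p + q)) : h a * h a = etaC p q a • (1 : Matrix (Fin N) (Fin N) ℂ) := by
  have := hc a a
  rw [if_pos rfl, ← two_smul ℂ, mul_smul] at this
  exact smul_right_injective _ (two_ne_zero' ℂ) this

lemma cliff_anti {p q N : ℕ} {h : Fin (p + q) → Matrix (Fin N) (Fin N) ℂ} (hc : CliffRel p q N h)
    {a b : Fin (p + q)} (hab : a ≠ b) : h a * h b = - (h b * h a) := by
  have := hc a b
  rw [if_neg hab, mul_zero, zero_smul] at this
  exact eq_neg_of_add_eq_zero_left this

/-- Infinitesimal Pauli theorem. -/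
lemma exists_inner {p q N : ℕ} {h D : Fin (p + q) → Matrix (Fin N) (Fin N) ℂ}
    (hc : CliffRel p q N h)
    (hD : ∀ a b, D a * h b + h a * D b + (D b * h a + h b * D a) = 0)
    (s : Finset (Fin (p + q))) :
    ∃ C : Matrix (Fin N) (Fin N) ℂ, ∀ a ∈ s, D a = C * h a - h a * C := by
  classical
  induction s using Finset.induction_on with
  | empty => exact ⟨0, by simp⟩
  | insert k s hk ih =>
    obtain ⟨C, hC⟩ := ih
    have hkk := cliff_sq hc k
    have he := etaC_sq p q k
    set E := D k - (C * h k - h k * C) with hE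
    -- the corrected derivative anticommutes with the earlier generators
    have hEk : E * h k = - (h k * E) := by
      have h1 := hD k k
      have h2 : (2 : ℂ) • (D k * h k + h k * D k) = 0 := by
        rw [two_smul, ← h1]
      have h3 : D k * h k + h k * D k = 0 := by
        exact (smul_eq_zero.mp h2).resolve_left two_ne_zero
      have h4 : E * h k + h k * E = (D k * h k + h k * D k) - (C * (h k * h k) - (h k * h k) * C) := by
        rw [hE]; noncomm_ring
      rw [h3, hkk] at h4
      simp at h4
      exact eq_neg_of_add_eq_zero_left h4
    have hEa : ∀ a ∈ s, E * h a = - (h a * E) := by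
      intro a ha
      have hak : a ≠ k := fun e => hk (e ▸ ha)
      have h1 := hD k a
      have h2 := cliff_anti hc hak
      rw [hC a ha] at h1
      have h4 : E * h a + h a * E = (D k * h a + h k * (C * h a - h a * C) +
          ((C * h a - h a * C) * h k + h a * D k)) - (C * (h a * h k + h k * h a)
            - (h a * h k + h k * h a) * C) := by
        rw [hE]; noncomm_ring
      rw [h1, h2] at h4
      simp at h4
      exact eq_neg_of_add_eq_zero_left h4
    refine ⟨C + (etaC p q k / 2) • (E * h k), ?_⟩
    intro a ha
    rw [Finset.mem_insert] at ha
    rcases ha with rfl | ha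
    · have h1 : (E * h a) * h a - h a * (E * h a) = (2 * etaC p q a) • E := by
        rw [← mul_assoc (h a), ← neg_eq_iff_eq_neg.mpr hEk, neg_mul, mul_assoc, hkk]
        simp [two_mul, add_smul]
      have h2 : (C + (etaC p q a / 2) • (E * h a)) * h a - h a * (C + (etaC p q a / 2) • (E * h a))
          = (C * h a - h a * C) + (etaC p q a / 2) • ((E * h a) * h a - h a * (E * h a)) := by
        rw [add_mul, mul_add, smul_mul_assoc, mul_smul_comm, smul_sub]; abel
      rw [h2, h1, smul_smul]
      have h3 : etaC p q a / 2 * (2 * etaC p q a) = 1 := by linear_combination he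
      rw [h3, one_smul, hE]; abel
    · have hak : a ≠ k := fun e => hk (e ▸ ha)
      have h1 : (E * h k) * h a - h a * (E * h k) = 0 := by
        rw [mul_assoc, cliff_anti hc hak.symm, mul_neg, ← mul_assoc, hEa a ha, ← mul_assoc]
        simp
      have h2 : (C + (etaC p q k / 2) • (E * h k)) * h a - h a * (C + (etaC p q k / 2) • (E * h k))
          = (C * h a - h a * C) + (etaC p q k / 2) • ((E * h k) * h a - h a * (E * h k)) := by
        rw [add_mul, mul_add, smul_mul_assoc, mul_smul_comm, smul_sub]; abel
      rw [h2, h1, smul_zero, add_zero, hC a ha]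

/-- Conjugation by a generator, as a linear map. -/
noncomputable def conjL {p q N : ℕ} (h : Fin (p + q) → Matrix (Fin N) (Fin N) ℂ)
    (a : Fin (p + q)) : Matrix (Fin N) (Fin N) ℂ →ₗ[ℂ] Matrix (Fin N) (Fin N) ℂ where
  toFun U := etaC p q a • (h a * U * h a)
  map_add' U V := by simp [mul_add, add_mul]
  map_smul' c U := by simp [smul_comm c]

lemma conjL_sq {p q N : ℕ} {h : Fin (p + q) → Matrix (Fin N) (Fin N) ℂ} (hc : CliffRel p q N h)
    (a : Fin (p + q)) (U) : conjL h a (conjL h a U) = U := by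
  have : h a * (h a * U * h a) * h a = (h a * h a) * U * (h a * h a) := by noncomm_ring
  simp only [conjL, LinearMap.coe_mk, AddHom.coe_mk, mul_smul_comm, smul_mul_assoc, smul_smul,
    etaC_sq, one_smul]
  rw [this, cliff_sq hc]
  simp [smul_smul, etaC_sq]

lemma conjL_comm {p q N : ℕ} {h : Fin (p + q) → Matrix (Fin N) (Fin N) ℂ} (hc : CliffRel p q N h)
    (a b : Fin (p + q)) (U) : conjL h a (conjL h b U) = conjL h b (conjL h a U) := by
  by_cases hab : a = b
  · rw [hab]
  have h1 : h a * (h b * U * h b) * h a = (h a * h b) * U * (h b * h a) := by noncomm_ring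
  have h2 : h b * (h a * U * h a) * h b = (h b * h a) * U * (h a * h b) := by noncomm_ring
  simp only [conjL, LinearMap.coe_mk, AddHom.coe_mk, mul_smul_comm, smul_mul_assoc, smul_smul]
  rw [h1, h2, cliff_anti hc hab, mul_comm (etaC p q a)]
  simp

lemma conjL_fix {p q N : ℕ} {h : Fin (p + q) → Matrix (Fin N) (Fin N) ℂ} (hc : CliffRel p q N h)
    (a : Fin (p + q)) (U) (hU : conjL h a U = U) : U * h a - h a * U = 0 := by
  have h0 : etaC p q a • (h a * U * h a) = U := hU
  have h1 : h a * U = U * h a := by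
    conv_lhs => rw [← h0]
    rw [mul_smul_comm, ← mul_assoc, ← mul_assoc, cliff_sq hc]
    simp [smul_smul, etaC_sq]
  rw [h1, sub_self]

lemma span_joint {p q N : ℕ} {h : Fin (p + q) → Matrix (Fin N) (Fin N) ℂ} (hc : CliffRel p q N h)
    (s : Finset (Fin (p + q))) (U : Matrix (Fin N) (Fin N) ℂ) :
    U ∈ Submodule.span ℂ {V | ∀ a ∈ s, conjL h a V = V ∨ conjL h a V = - V} := by
  classical
  induction s using Finset.induction_on with
  | empty => exact Submodule.subset_span (by simp)
  | insert k s hk ih =>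
    refine Submodule.span_le.mpr ?_ ih
    intro V hV
    have h1 : V = (1/2 : ℂ) • (V + conjL h k V) + (1/2 : ℂ) • (V - conjL h k V) := by
      rw [← smul_add, add_add_sub_cancel, ← two_smul ℂ, smul_smul]; norm_num
    rw [SetLike.mem_coe, h1]
    refine add_mem (Submodule.smul_mem _ _ (Submodule.subset_span ?_))
      (Submodule.smul_mem _ _ (Submodule.subset_span ?_))
    · intro a ha
      rw [Finset.mem_insert] at ha
      rcases ha with rfl | ha
      · left; rw [map_add, conjL_sq hc, add_comm]
      · rw [map_add, conjL_comm hc]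
        rcases hV a ha with e | e
        · left; rw [e]
        · right; rw [e, map_neg, neg_add]
    · intro a ha
      rw [Finset.mem_insert] at ha
      rcases ha with rfl | ha
      · right; rw [map_sub, conjL_sq hc, neg_sub]
      · rw [map_sub, conjL_comm hc]
        rcases hV a ha with e | e
        · left; rw [e]
        · right; rw [e, map_neg, neg_sub]; abel

lemma lam_inj {n : ℕ} (hn : Even n) {k l : ℕ} (h : lam n k = lam n l) : k = l := by
  unfold lam at h
  rcases Nat.even_or_odd k with hk | hk <;> rcases Nat.even_or_odd l with hl | hl <;>
    simp only [hk.neg_one_pow, hl.neg_one_pow] at h <;> grind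

lemma vand_inv {n : ℕ} (hn : Even n) : (vand n)⁻¹ * vand n = 1 := by
  apply Matrix.nonsing_inv_mul
  have : vand n = (Matrix.vandermonde fun l : Fin (n + 1) => (lam n l : ℂ))ᵀ := by
    ext i j; simp [vand, Matrix.vandermonde_apply]
  rw [this, Matrix.det_transpose, isUnit_iff_ne_zero, Matrix.det_vandermonde_ne_zero_iff]
  intro a b hab
  have h1 : (lam n a : ℂ) = (lam n b : ℂ) := hab
  exact Fin.ext (lam_inj hn (by exact_mod_cast h1))

lemma rcoef_sum {n : ℕ} (hn : Even n) (k : Fin (n + 1)) :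
    (∑ l : Fin (n + 1), rcoef n l * (lam n k : ℂ) ^ (l : ℕ)) * ((n : ℂ) - lam n k)
      = if k = 0 then 0 else 1 := by
  have h1 : ∑ l : Fin (n + 1), rcoef n l * (lam n k : ℂ) ^ (l : ℕ)
      = ∑ k' ∈ Finset.Ioi (0 : Fin (n + 1)), ((vand n)⁻¹ * vand n) k' k / ((n : ℂ) - lam n k') := by
    simp only [rcoef, Finset.sum_mul, Matrix.mul_apply, Finset.sum_div]
    rw [Finset.sum_comm]
    refine Finset.sum_congr rfl fun _ _ => Finset.sum_congr rfl fun _ _ => ?_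
    simp only [vand, Matrix.of_apply]
    ring
  rw [h1, vand_inv hn]
  split_ifs with hk
  · subst hk; simp [lam]
  · have hk0 : k ∈ Finset.Ioi (0 : Fin (n + 1)) := by
      rw [Finset.mem_Ioi]; exact Fin.pos_of_ne_zero hk
    rw [Finset.sum_eq_single_of_mem k hk0]
    · rw [Matrix.one_apply_eq, one_div, inv_mul_cancel₀]
      intro h0
      have h2 : lam n (k : ℕ) = lam n 0 := by
        have : (lam n (k:ℕ) : ℂ) = ((n : ℤ) : ℂ) := by
          push_cast; exact (sub_eq_zero.mp h0).symm
        have := Int.cast_injective this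
        rw [this]; simp [lam]
      exact hk (Fin.ext (lam_inj hn h2))
    · intro b _ hb
      rw [Matrix.one_apply_ne hb, zero_div]

lemma exists_lam {n : ℕ} (hn : Even n) (j : ℕ) (hj : j ≤ n) :
    ∃ k : Fin (n + 1), lam n k = (n : ℤ) - 2 * j ∧ (k = 0 → j = 0) := by
  rcases Nat.even_or_odd j with h | h
  · exact ⟨⟨j, by omega⟩, by simp [lam, h.neg_one_pow], fun e => by simpa using congrArg Fin.val e⟩
  · refine ⟨⟨n - j, by omega⟩, ?_, fun e => ?_⟩
    · have : Odd (n - j) := by grind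
      simp only [lam, this.neg_one_pow]
      omega
    · have := congrArg Fin.val e
      simp at this
      grind

/-- The generator contraction as a linear map. -/
noncomputable def genL {p q N : ℕ} (h : Fin (p + q) → Matrix (Fin N) (Fin N) ℂ) :
    Module.End ℂ (Matrix (Fin N) (Fin N) ℂ) := ∑ a, conjL h a

lemma genL_apply {p q N : ℕ} (h : Fin (p + q) → Matrix (Fin N) (Fin N) ℂ) :
    gencon p q N h = genL h := by
  funext U; simp [genL, gencon, conjL]

/-- The operator giving `C` from `W`. -/
noncomputable def rL {p q N : ℕ} (h : Fin (p + q) → Matrix (Fin N) (Fin N) ℂ) :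
    Module.End ℂ (Matrix (Fin N) (Fin N) ℂ) :=
  ∑ l : Fin (p + q + 1), rcoef (p + q) l • (genL h) ^ (l : ℕ)

lemma genL_joint {p q N : ℕ} {h : Fin (p + q) → Matrix (Fin N) (Fin N) ℂ}
    {V : Matrix (Fin N) (Fin N) ℂ} (hV : ∀ a, conjL h a V = V ∨ conjL h a V = - V) :
    ∃ j : ℕ, j ≤ p + q ∧ genL h V = ((((p + q : ℕ) : ℤ) - 2 * j : ℤ) : ℂ) • V ∧
      (j = 0 → ∀ a, conjL h a V = V) := by
  classical
  set S := Finset.univ.filter fun a => conjL h a V ≠ V with hS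
  refine ⟨S.card, by simpa using S.card_le_univ, ?_, ?_⟩
  · have h1 : ∀ a, conjL h a V = (1 - 2 * (if conjL h a V ≠ V then 1 else 0) : ℂ) • V := by
      intro a
      split_ifs with hh
      · rw [(hV a).resolve_left hh]; norm_num
      · push Not at hh; rw [hh]; simp
    rw [genL, LinearMap.sum_apply, Finset.sum_congr rfl fun a _ => h1 a, ← Finset.sum_smul]
    congr 1
    rw [Finset.sum_sub_distrib, ← Finset.mul_sum, Finset.sum_boole]
    simp [hS]
  · intro h0 a
    rw [Finset.card_eq_zero] at h0
    by_contra hh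
    have : a ∈ S := by simp [hS, hh]
    simp [h0] at this

lemma rL_key {p q N : ℕ} (hn : Even (p + q)) {h : Fin (p + q) → Matrix (Fin N) (Fin N) ℂ}
    (hc : CliffRel p q N h) (a : Fin (p + q)) (U : Matrix (Fin N) (Fin N) ℂ) :
    (rL h (((p + q : ℕ) : ℂ) • U - genL h U) - U) * h a
      - h a * (rL h (((p + q : ℕ) : ℂ) • U - genL h U) - U) = 0 := by
  have hU := span_joint hc Finset.univ U
  induction hU using Submodule.span_induction with
  | zero => simp
  | add x y _ _ hx hy =>
    have := congrArg₂ (· + ·) hx hy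
    simp only [smul_add, map_add, map_sub, add_zero] at this ⊢
    rw [← this]; noncomm_ring
  | smul c x _ hx =>
    have := congrArg (c • ·) hx
    simp only [smul_zero] at this
    rw [← this, smul_comm _ c, map_smul (genL h), ← smul_sub, map_smul, ← smul_sub, smul_mul_assoc,
      mul_smul_comm, smul_sub]
  | mem V hV =>
    obtain ⟨j, hj, hF, hj0⟩ := genL_joint (h := h) (V := V) fun a => hV a (Finset.mem_univ a)
    obtain ⟨k, hk, hk0⟩ := exists_lam hn j hj
    rw [← hk] at hF
    have hp : ∀ l : ℕ, (genL h ^ l) V = ((lam (p + q) k : ℂ) ^ l) • V := by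
      intro l
      induction l with
      | zero => simp
      | succ l ih => rw [pow_succ', Module.End.mul_apply, ih, map_smul, hF, smul_smul, pow_succ]
    have hr : rL h (((p + q : ℕ) : ℂ) • V - genL h V) = (if k = 0 then 0 else 1 : ℂ) • V := by
      rw [hF, ← sub_smul, map_smul, rL, LinearMap.sum_apply]
      simp only [LinearMap.smul_apply, hp, smul_smul]
      rw [← Finset.sum_smul, smul_smul, mul_comm, rcoef_sum hn k]
    rw [hr]
    split_ifs with hk1
    · have := conjL_fix hc a V (hj0 (hk0 hk1) a)
      rw [zero_smul, zero_sub, neg_mul, mul_neg, ← neg_sub', this, neg_zero]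
    · simp

lemma pder_apply {n N : ℕ} (f : (Fin n → ℝ) → Matrix (Fin N) (Fin N) ℂ)
    (x : Fin n → ℝ) (hf : DifferentiableAt ℝ f x) (i j : Fin N) :
    HasFDerivAt (fun y => f y i j)
      (((ContinuousLinearMap.proj (R := ℝ) (φ := fun _ : Fin N => ℂ) j).comp
        (ContinuousLinearMap.proj (R := ℝ) (φ := fun _ : Fin N => Fin N → ℂ) i)).comp
          (fderiv ℝ f x)) x := by
  exact ((ContinuousLinearMap.proj (R := ℝ) (φ := fun _ : Fin N => ℂ) j).comp
        (ContinuousLinearMap.proj (R := ℝ) (φ := fun _ : Fin N => Fin N → ℂ) i)).hasFDerivAt.comp x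
        hf.hasFDerivAt

lemma pder_rel {n N : ℕ} (μ : Fin n) (f g : (Fin n → ℝ) → Matrix (Fin N) (Fin N) ℂ)
    (x : Fin n → ℝ) (hf : DifferentiableAt ℝ f x) (hg : DifferentiableAt ℝ g x)
    (c : Matrix (Fin N) (Fin N) ℂ) (hfg : ∀ y, f y * g y + g y * f y = c) :
    pder μ f x * g x + f x * pder μ g x + (pder μ g x * f x + g x * pder μ f x) = 0 := by
  ext i j
  have h1 := HasFDerivAt.fun_sum (u := Finset.univ) fun k _ =>
    (pder_apply f x hf i k).mul (pder_apply g x hg k j)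
  have h2 := HasFDerivAt.fun_sum (u := Finset.univ) fun k _ =>
    (pder_apply g x hg i k).mul (pder_apply f x hf k j)
  have h3 := h1.add h2
  have h4 := (hasFDerivAt_const (𝕜 := ℝ) (c i j) x).unique (f := fun _ => c i j) (by
    refine h3.congr_of_eventuallyEq (Filter.Eventually.of_forall fun y => ?_)
    have := congrFun (congrFun (hfg y) i) j
    rw [Matrix.add_apply, Matrix.mul_apply, Matrix.mul_apply] at this
    exact this.symm)
  have h5 := congrArg (fun L => L (Pi.single μ 1)) h4
  simp only [Matrix.add_apply, Matrix.mul_apply, Matrix.zero_apply]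
  simp only [_root_.add_apply, _root_.sum_apply,
    _root_.smul_apply, ContinuousLinearMap.comp_apply, ContinuousLinearMap.proj_apply,
    _root_.zero_apply, Finset.sum_add_distrib, smul_eq_mul] at h5
  have h6 : (0 : ℂ) = ∑ k, f x i k * pder μ g x k j + ∑ k, g x k j * pder μ f x i k +
      (∑ k, g x i k * pder μ f x k j + ∑ k, f x k j * pder μ g x i k) := h5
  rw [h6]
  simp only [mul_comm (pder μ _ x _ _)]
  ring

/-- for even n = p + q ≥ 2 and N = 2^{n/2}, the covector
C_μ = Σ_l r_l F^l(Σ_ρ η_{ρρ} (∂_μ h^ρ) h^ρ) solves the primitive field equation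
∂_μ h_ρ − [C_μ, h_ρ] = 0 (with h_ρ = η_{ρρ} h^ρ). -/
theorem explicit_solution_of_primitive_equation_even
    (p q : ℕ) (hn : 2 ≤ p + q) (heven : Even (p + q))
    (h : Fin (p + q) → (Fin (p + q) → ℝ) →
      Matrix (Fin (2 ^ ((p + q) / 2))) (Fin (2 ^ ((p + q) / 2))) ℂ)
    (hdiff : ∀ μ, ContDiff ℝ 1 (h μ))
    (hcl : ∀ x, CliffRel p q (2 ^ ((p + q) / 2)) (fun μ => h μ x)) :
    ∀ μ ρ x,
      pder μ (fun y => etaC p q ρ • h ρ y) x -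
        (Cformula p q (2 ^ ((p + q) / 2)) h μ x * (etaC p q ρ • h ρ x) -
          (etaC p q ρ • h ρ x) * Cformula p q (2 ^ ((p + q) / 2)) h μ x) = 0 := by

  intro μ ρ x
  have hd : ∀ a, DifferentiableAt ℝ (h a) x := fun a =>
    ((hdiff a).differentiable (by norm_num)) x
  have hc := hcl x
  have hrel : ∀ a b, pder μ (h a) x * h b x + h a x * pder μ (h b) x +
      (pder μ (h b) x * h a x + h b x * pder μ (h a) x) = 0 := fun a b =>
    pder_rel μ (h a) (h b) x (hd a) (hd b) _ fun y => hcl y a b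
  obtain ⟨C, hC⟩ := exists_inner (D := fun a => pder μ (h a) x) hc hrel Finset.univ
  have hW : Wfun p q _ h μ x = ((p + q : ℕ) : ℂ) • C - genL (fun a => h a x) C := by
    have h1 : ∀ a, etaC p q a • (pder μ (h a) x * h a x) = C - conjL (fun a => h a x) a C := by
      intro a
      have h2 : pder μ (h a) x = C * h a x - h a x * C := hC a (Finset.mem_univ a)
      rw [h2, sub_mul, mul_assoc C, cliff_sq hc a, smul_sub]
      simp [smul_smul, etaC_sq, conjL]
    rw [Wfun, Finset.sum_congr rfl fun a _ => h1 a, Finset.sum_sub_distrib, genL,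
      LinearMap.sum_apply]
    simp [add_smul, ← Nat.cast_smul_eq_nsmul ℂ]
  have hCf : Cformula p q _ h μ x = rL (fun a => h a x) (Wfun p q _ h μ x) := by
    rw [Cformula, rL, LinearMap.sum_apply, genL_apply]
    simp only [LinearMap.smul_apply, Module.End.pow_apply]
  have hp : pder μ (fun y => etaC p q ρ • h ρ y) x = etaC p q ρ • pder μ (h ρ) x := by
    unfold pder etaC
    split_ifs
    · simp only [one_smul]
    · simp only [neg_smul, one_smul]
      exact congrArg (fun L => L (Pi.single μ 1)) (fderiv_fun_neg (𝕜 := ℝ) (f := h ρ) (x := x))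
  have key := rL_key heven hc ρ C
  rw [← hW, ← hCf] at key
  have h2 : pder μ (h ρ) x = C * h ρ x - h ρ x * C := hC ρ (Finset.mem_univ ρ)
  rw [hp, mul_smul_comm, smul_mul_assoc, ← smul_sub, ← smul_sub, h2]
  have h3 : C * h ρ x - h ρ x * C - (Cformula p q _ h μ x * h ρ x - h ρ x * Cformula p q _ h μ x)
      = - ((Cformula p q _ h μ x - C) * h ρ x - h ρ x * (Cformula p q _ h μ x - C)) := by
    noncomm_ring
  rw [h3, key, neg_zero, smul_zero]
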